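/- arXiv:1505.01520 — 3 statements merged into one kernel-verified Lean document; each statement's English description precedes it below -/
import Mathlib

section
/- Suppose there exist real numbers γ ≤ Γ with γ ≤ f″(t) ≤ Γ for almost every t ∈ [a,b]. Then |τ(x;α,β) − κ·m(x)| ≤ (b−a)·N(x)·(Γ−γ)/2, where κ = (f′(b) − f′(a))/(b−a), m(x) = (1/(6(α+β)))·[ (α/(x−a))·{(x−a−h(b−a)/2)³ + (h(b−a)/2)³} + (β/(b−x))·{(b−h(b−a)/2−x)³ + (h(b−a)/2)³} ], and N(x)² = (1/(b−a))·(1/(20(α+β)²))·[ (α²/(x−a)²)·{(x−a−h(b−a)/2)⁵ + (h(b−a)/2)⁵} + (β²/(b−x)²)·{(b−h(b−a)/2−x)⁵ + (h(b−a)/2)⁵} ] − (m(x)/(b−a))². -/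
open MeasureTheory intervalIntegral

/-- Integral mean of `f` over `[c,d]`. -/
noncomputable def intMean (f : ℝ → ℝ) (c d : ℝ) : ℝ :=
  (1 / (d - c)) * ∫ t in c..d, f t

/-- The functional τ(x; α, β) of the paper (with parameter h). -/
noncomputable def tau (a b h α β : ℝ) (f f' : ℝ → ℝ) (x : ℝ) : ℝ :=
  (1 / (2 * (α + β))) * ((α / (x - a)) * (x - a - h * (b - a) / 2) ^ 2
      - (β / (b - x)) * (x - b + h * (b - a) / 2) ^ 2) * f' x
  - (1 / (α + β)) * ((α / (x - a)) * (x - a - h * (b - a) / 2)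
      - (β / (b - x)) * (x - b + h * (b - a) / 2)) * f x
  - (h * (b - a) / (2 * (α + β))) * ((α / (x - a)) * f a + (β / (b - x)) * f b)
  + (h ^ 2 * (b - a) ^ 2 / (8 * (α + β))) * ((β / (b - x)) * f' b - (α / (x - a)) * f' a)
  + (1 / (α + β)) * (α * intMean f a x + β * intMean f x b)

/-- The quantity m(x) = ∫_a^b P(x,t) dt. -/
noncomputable def pertM (a b h α β x : ℝ) : ℝ :=
  (1 / (6 * (α + β))) *
    ((α / (x - a)) * ((x - a - h * (b - a) / 2) ^ 3 + (h * (b - a) / 2) ^ 3)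
      + (β / (b - x)) * ((b - h * (b - a) / 2 - x) ^ 3 + (h * (b - a) / 2) ^ 3))

/-- The quantity N(x)² of the perturbed results. -/
noncomputable def pertNsq (a b h α β x : ℝ) : ℝ :=
  (1 / (b - a)) * (1 / (20 * (α + β) ^ 2)) *
    ((α ^ 2 / (x - a) ^ 2) * ((x - a - h * (b - a) / 2) ^ 5 + (h * (b - a) / 2) ^ 5)
      + (β ^ 2 / (b - x) ^ 2) * ((b - h * (b - a) / 2 - x) ^ 5 + (h * (b - a) / 2) ^ 5))
  - (pertM a b h α β x / (b - a)) ^ 2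

/-! Two integrations by parts turn `tau` into `∫ P(x, t) f''(t) dt` over `[a, b]`, where the kernel
`P(x, ·)` is a multiple of a square on each side of `x`. For the uniform probability measure on
`[a, b]`, `pertM / (b - a)` is the mean of `P(x, ·)` and `pertNsq` its variance, so the left-hand
side of the estimate is `b - a` times the covariance of `P(x, ·)` and `f''`. It remains to combine
the Cauchy–Schwarz inequality for covariances with Popoviciu's bound `(Γ - γ)² / 4` for the variance
of a function with values in `[γ, Γ]`. -/

open ProbabilityTheory Set

section Covariance

variable {Ω : Type*} {mΩ : MeasurableSpace Ω} {μ : Measure Ω} {X Y : Ω → ℝ}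

theorem covariance_sq_le_variance_mul_variance [IsFiniteMeasure μ]
    (hX : MemLp X 2 μ) (hY : MemLp Y 2 μ) :
    cov[X, Y; μ] ^ 2 ≤ Var[X; μ] * Var[Y; μ] := by
  have quadratic_nonneg (s : ℝ) :
      0 ≤ Var[X; μ] * (s * s) + 2 * cov[X, Y; μ] * s + Var[Y; μ] := by
    have h := variance_nonneg (s • X + Y) μ
    rw [variance_add (hX.const_smul s) hY, variance_smul, covariance_smul_left] at h
    linarith
  have h := discrim_le_zero quadratic_nonneg
  rw [discrim] at h
  linarith

theorem abs_covariance_le_of_mem_Icc [IsProbabilityMeasure μ] {γ Γ : ℝ}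
    (hX : MemLp X 2 μ) (hY : AEMeasurable Y μ) (hbd : ∀ᵐ ω ∂μ, Y ω ∈ Icc γ Γ) :
    |cov[X, Y; μ]| ≤ √(Var[X; μ]) * ((Γ - γ) / 2) := by
  obtain ⟨ω, hω⟩ := hbd.exists
  have hγΓ : 0 ≤ (Γ - γ) / 2 := by linarith [hω.1.trans hω.2]
  have hY₂ : MemLp Y 2 μ := memLp_of_bounded hbd hY.aestronglyMeasurable 2
  calc |cov[X, Y; μ]|
      ≤ √(Var[X; μ] * Var[Y; μ]) :=
        Real.abs_le_sqrt (covariance_sq_le_variance_mul_variance hX hY₂)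
    _ ≤ √(Var[X; μ] * ((Γ - γ) / 2) ^ 2) := by
        gcongr
        exacts [variance_nonneg X μ, variance_le_sq_of_bounded hbd hY]
    _ = √(Var[X; μ]) * ((Γ - γ) / 2) := by
        rw [Real.sqrt_mul (variance_nonneg X μ), Real.sqrt_sq hγΓ]

end Covariance

section IntervalIntegral

variable {a b c d : ℝ}

theorem integral_cond_Ioc {E : Type*} [NormedAddCommGroup E] [NormedSpace ℝ E]
    (hab : a ≤ b) (g : ℝ → E) :
    ∫ t, g t ∂(volume[|Ioc a b]) = (b - a)⁻¹ • ∫ t in a..b, g t := by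
  rw [ProbabilityTheory.cond, MeasureTheory.integral_smul_measure, integral_of_le hab,
    Real.volume_Ioc, ENNReal.toReal_inv, ENNReal.toReal_ofReal (sub_nonneg.2 hab)]

/-- The pre-Grüss inequality: the square root is the standard deviation of `P` over `[a, b]`. -/
theorem abs_integral_mul_sub_integral_mul_integral_le {P g : ℝ → ℝ} {γ Γ : ℝ} (hab : a < b)
    (hP : MemLp P 2 (volume.restrict (Ioc a b))) (hg : AEMeasurable g (volume.restrict (Ioc a b)))
    (hbd : ∀ᵐ t ∂volume.restrict (Ioc a b), g t ∈ Icc γ Γ) :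
    |(∫ t in a..b, P t * g t) - (∫ t in a..b, g t) / (b - a) * ∫ t in a..b, P t| ≤
      (b - a) * √((∫ t in a..b, P t ^ 2) / (b - a) - ((∫ t in a..b, P t) / (b - a)) ^ 2) *
        (Γ - γ) / 2 := by
  have hL : 0 < b - a := sub_pos.2 hab
  have hvol : volume (Ioc a b) ≠ 0 := by simpa using hab
  have : IsProbabilityMeasure (volume[|Ioc a b]) :=
    cond_isProbabilityMeasure_of_finite hvol measure_Ioc_lt_top.ne
  have hc : (volume (Ioc a b))⁻¹ ≠ ⊤ := ENNReal.inv_ne_top.2 hvol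
  have hP' : MemLp P 2 (volume[|Ioc a b]) := hP.smul_measure hc
  have hbd' : ∀ᵐ t ∂volume[|Ioc a b], g t ∈ Icc γ Γ := Measure.ae_smul_measure hbd _
  have hg' : AEMeasurable g (volume[|Ioc a b]) := hg.smul_measure _
  have gruss := abs_covariance_le_of_mem_Icc hP' hg' hbd'
  rw [covariance_eq_sub hP' (memLp_of_bounded hbd' hg'.aestronglyMeasurable 2),
    variance_eq_sub hP'] at gruss
  simp only [integral_cond_Ioc hab.le, Pi.mul_apply, Pi.pow_apply, smul_eq_mul,
    ← div_eq_inv_mul] at gruss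
  calc |(∫ t in a..b, P t * g t) - (∫ t in a..b, g t) / (b - a) * ∫ t in a..b, P t|
      = (b - a) * |(∫ t in a..b, P t * g t) / (b - a) -
          (∫ t in a..b, P t) / (b - a) * ((∫ t in a..b, g t) / (b - a))| := by
        rw [← abs_of_pos hL, ← abs_mul, abs_of_pos hL]
        congr 1
        field_simp
    _ ≤ (b - a) * (√((∫ t in a..b, P t ^ 2) / (b - a) - ((∫ t in a..b, P t) / (b - a)) ^ 2) *
          ((Γ - γ) / 2)) := by gcongr
    _ = _ := by ring

theorem integral_ite_le {E : Type*} [NormedAddCommGroup E] [NormedSpace ℝ E] {x : ℝ}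
    {F G : ℝ → E} (hax : a ≤ x) (hxb : x ≤ b)
    (hF : IntervalIntegrable F volume a x) (hG : IntervalIntegrable G volume x b) :
    ∫ t in a..b, (if t ≤ x then F t else G t) = (∫ t in a..x, F t) + ∫ t in x..b, G t := by
  have hleft : Iic x ∩ Ioc a b = Ioc a x := by grind
  have hright : (Iic x)ᶜ ∩ Ioc a b = Ioc x b := by grind
  rw [integral_of_le (hax.trans hxb), integral_of_le hax, integral_of_le hxb, ← hleft, ← hright,
    ← Measure.restrict_restrict measurableSet_Iic,
    ← Measure.restrict_restrict measurableSet_Iic.compl]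
  refine MeasureTheory.integral_piecewise (s := Iic x) measurableSet_Iic ?_ ?_
  · rw [IntegrableOn, Measure.restrict_restrict measurableSet_Iic, hleft]
    exact hF.1
  · rw [IntegrableOn, Measure.restrict_restrict measurableSet_Iic.compl, hright]
    exact hG.1

theorem integral_sub_pow (p : ℝ) (n : ℕ) :
    ∫ t in c..d, (t - p) ^ n = ((d - p) ^ (n + 1) - (c - p) ^ (n + 1)) / (n + 1) := by
  rw [integral_comp_sub_right (fun t => t ^ n), integral_pow]

theorem integral_sub_sq_mul_deriv {f g : ℝ → ℝ} (p : ℝ)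
    (hf : ∀ t ∈ uIcc c d, HasDerivWithinAt f (g t) (uIcc c d) t)
    (hg : AbsolutelyContinuousOnInterval g c d) :
    ∫ t in c..d, (t - p) ^ 2 * deriv g t =
      (d - p) ^ 2 * g d - (c - p) ^ 2 * g c -
        2 * ((d - p) * f d - (c - p) * f c - ∫ t in c..d, f t) := by
  have hsq : AbsolutelyContinuousOnInterval (fun t => (t - p) ^ 2) c d :=
    ContDiffOn.absolutelyContinuousOnInterval (by fun_prop)
  have hderiv (t : ℝ) : deriv (fun t => (t - p) ^ 2) t = 2 * (t - p) := by simp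
  have first_parts : ∫ t in c..d, (t - p) ^ 2 * deriv g t =
      (d - p) ^ 2 * g d - (c - p) ^ 2 * g c - 2 * ∫ t in c..d, (t - p) * g t := by
    rw [hsq.integral_mul_deriv_eq_deriv_mul hg]
    simp only [hderiv, mul_assoc, intervalIntegral.integral_const_mul]
  have second_parts : ∫ t in c..d, (t - p) * g t =
      (d - p) * f d - (c - p) * f c - ∫ t in c..d, f t := by
    simpa using integral_mul_deriv_eq_deriv_mul_of_hasDerivWithinAt (u := fun t => t - p)
      (fun t _ => ((hasDerivAt_id t).sub_const p).hasDerivWithinAt) hf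
      intervalIntegrable_const hg.continuousOn.intervalIntegrable
  rw [first_parts, second_parts]

end IntervalIntegral

section Primitive

variable {a b : ℝ} {F φ : ℝ → ℝ}

theorem absolutelyContinuousOnInterval_of_eqOn_primitive (hφ : IntervalIntegrable φ volume a b)
    (hF : ∀ t ∈ uIcc a b, F t = F a + ∫ u in a..t, φ u) :
    AbsolutelyContinuousOnInterval F a b := by
  refine Filter.Tendsto.congr' ?_
    (hφ.absolutelyContinuousOnInterval_intervalIntegral left_mem_uIcc)
  filter_upwards [Filter.mem_inf_of_right (Filter.mem_principal_self _)] with I hI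
  refine Finset.sum_congr rfl fun i hi => ?_
  rw [hF _ (hI.1 i hi).1, hF _ (hI.1 i hi).2, dist_add_left]

theorem ae_deriv_eq_of_eqOn_primitive (hφ : IntervalIntegrable φ volume a b)
    (hF : ∀ t ∈ uIcc a b, F t = F a + ∫ u in a..t, φ u) :
    deriv F =ᵐ[volume.restrict (uIcc a b)] φ := by
  have hIoo : volume.restrict (uIcc a b) = volume.restrict (Ioo (a ⊓ b) (a ⊔ b)) :=
    restrict_Ioo_eq_restrict_Icc.symm
  rw [hIoo, Filter.EventuallyEq, ae_restrict_iff' measurableSet_Ioo]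
  filter_upwards [hφ.ae_hasDerivAt_integral] with t ht hmem
  have heq : F =ᶠ[nhds t] fun s => F a + ∫ u in a..s, φ u :=
    Filter.eventually_of_mem (Icc_mem_nhds hmem.1 hmem.2) hF
  rw [heq.deriv_eq]
  exact ((ht (Ioo_subset_Icc_self hmem) a left_mem_uIcc).const_add (F a)).deriv

end Primitive

section PeanoKernel

variable {a b h α β x : ℝ}

/-- The Peano kernel `P(x, ·)` of the functional `tau`, against which `f''` is integrated. The value
at the node `t = x` is irrelevant. -/
noncomputable def peanoKernel (a b h α β x t : ℝ) : ℝ :=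
  if t ≤ x then α / (2 * (α + β) * (x - a)) * (t - (a + h * (b - a) / 2)) ^ 2
  else β / (2 * (α + β) * (b - x)) * (t - (b - h * (b - a) / 2)) ^ 2

theorem memLp_two_peanoKernel (a b h α β x : ℝ) :
    MemLp (peanoKernel a b h α β x) 2 (volume.restrict (Ioc a b)) := by
  have memLp_two {F : ℝ → ℝ} (hF : Continuous F) : MemLp F 2 (volume.restrict (Ioc a b)) :=
    (memLp_two_iff_integrable_sq hF.aestronglyMeasurable).2 (hF.pow 2).integrableOn_Ioc
  exact MemLp.piecewise (s := Iic x) measurableSet_Iic ((memLp_two (by fun_prop)).restrict _)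
    ((memLp_two (by fun_prop)).restrict _)

theorem integral_peanoKernel (hax : a ≤ x) (hxb : x ≤ b) :
    ∫ t in a..b, peanoKernel a b h α β x t = pertM a b h α β x := by
  simp only [peanoKernel]
  rw [integral_ite_le hax hxb (Continuous.intervalIntegrable (by fun_prop) _ _)
    (Continuous.intervalIntegrable (by fun_prop) _ _), intervalIntegral.integral_const_mul,
    intervalIntegral.integral_const_mul, integral_sub_pow, integral_sub_pow, pertM]
  field_simp
  ring

theorem integral_peanoKernel_sq_div_sub_sq (hax : a ≤ x) (hxb : x ≤ b) :
    (∫ t in a..b, peanoKernel a b h α β x t ^ 2) / (b - a) - (pertM a b h α β x / (b - a)) ^ 2 =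
      pertNsq a b h α β x := by
  simp only [peanoKernel, ite_pow, mul_pow, ← pow_mul]
  rw [integral_ite_le hax hxb (Continuous.intervalIntegrable (by fun_prop) _ _)
    (Continuous.intervalIntegrable (by fun_prop) _ _), intervalIntegral.integral_const_mul,
    intervalIntegral.integral_const_mul, integral_sub_pow, integral_sub_pow, pertNsq]
  field_simp
  ring

theorem tau_eq_integral_peanoKernel_mul_deriv {f f' : ℝ → ℝ}
    (hax : a ≤ x) (hxb : x ≤ b) (hf : ∀ t ∈ Icc a b, HasDerivWithinAt f (f' t) (Icc a b) t)
    (hf' : AbsolutelyContinuousOnInterval f' a b) :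
    tau a b h α β f f' x = ∫ t in a..b, peanoKernel a b h α β x t * deriv f' t := by
  rw [← uIcc_of_le (hax.trans hxb)] at hf
  have hx : x ∈ uIcc a b := mem_uIcc_of_le hax hxb
  have hleft : uIcc a x ⊆ uIcc a b := uIcc_subset_uIcc_left hx
  have hright : uIcc x b ⊆ uIcc a b := uIcc_subset_uIcc_right hx
  have parts_left := integral_sub_sq_mul_deriv (a + h * (b - a) / 2)
    (fun t ht => (hf t (hleft ht)).mono hleft) (hf'.mono hleft)
  have parts_right := integral_sub_sq_mul_deriv (b - h * (b - a) / 2)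
    (fun t ht => (hf t (hright ht)).mono hright) (hf'.mono hright)
  simp only [peanoKernel, ite_mul, mul_assoc]
  rw [integral_ite_le hax hxb
      (((hf'.mono hleft).intervalIntegrable_deriv.continuousOn_mul (by fun_prop)).const_mul _)
      (((hf'.mono hright).intervalIntegrable_deriv.continuousOn_mul (by fun_prop)).const_mul _),
    intervalIntegral.integral_const_mul, intervalIntegral.integral_const_mul,
    parts_left, parts_right]
  unfold tau intMean
  field_simp
  ring

end PeanoKernel

theorem stmt_16_general {a b h α β x γ Γ : ℝ} {f f' : ℝ → ℝ}
    (_hαβ : α + β ≠ 0) (hax : a < x) (hxb : x < b)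
    (hf : ∀ t ∈ Icc a b, HasDerivWithinAt f (f' t) (Icc a b) t)
    (hf' : AbsolutelyContinuousOnInterval f' a b)
    (hbd : ∀ᵐ t ∂volume.restrict (Icc a b), deriv f' t ∈ Icc γ Γ) :
    |tau a b h α β f f' x - (f' b - f' a) / (b - a) * pertM a b h α β x| ≤
      (b - a) * √(pertNsq a b h α β x) * (Γ - γ) / 2 := by
  have gruss := abs_integral_mul_sub_integral_mul_integral_le (hax.trans hxb)
    (memLp_two_peanoKernel a b h α β x) (measurable_deriv f').aemeasurable
    (ae_restrict_of_ae_restrict_of_subset Ioc_subset_Icc_self hbd)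
  rwa [← tau_eq_integral_peanoKernel_mul_deriv hax.le hxb.le hf hf', hf'.integral_deriv_eq_sub,
    integral_peanoKernel hax.le hxb.le, integral_peanoKernel_sq_div_sub_sq hax.le hxb.le] at gruss

theorem stmt_16 (a b h α β x γ Γ : ℝ) (f f' f'' : ℝ → ℝ)
    (hab : a < b)
    (hh : h ∈ Set.Icc (0 : ℝ) 1)
    (hα : 0 ≤ α) (hβ : 0 ≤ β) (hαβ : 0 < α + β)
    (hax : a < x) (hxb : x < b)
    (hx1 : a + h * (b - a) / 2 ≤ x) (hx2 : x ≤ b - h * (b - a) / 2)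
    (hfd : ∀ t ∈ Set.Icc a b, HasDerivAt f (f' t) t)
    (hf''int : IntervalIntegrable f'' MeasureTheory.volume a b)
    (hac : ∀ t ∈ Set.Icc a b, f' t = f' a + ∫ u in a..t, f'' u)
    (hγΓ : γ ≤ Γ)
    (hbd : ∀ᵐ t ∂MeasureTheory.volume.restrict (Set.Icc a b), γ ≤ f'' t ∧ f'' t ≤ Γ) :
    |tau a b h α β f f' x - ((f' b - f' a) / (b - a)) * pertM a b h α β x| ≤
      (b - a) * Real.sqrt (pertNsq a b h α β x) * (Γ - γ) / 2 := by
  rw [← Set.uIcc_of_le hab.le] at hac hbd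
  refine stmt_16_general hαβ.ne' hax hxb (fun t ht => (hfd t ht).hasDerivWithinAt)
    (absolutelyContinuousOnInterval_of_eqOn_primitive hf''int hac) ?_
  rw [← uIcc_of_le hab.le]
  filter_upwards [hbd, ae_deriv_eq_of_eqOn_primitive hf''int hac] with t ht heq
  exact heq ▸ ht
end

section
/- If f″ is essentially bounded on [a,b], then | (1/2)·[α(b−x)(x−a−h(b−a)/2)² − β(x−a)(x−b+h(b−a)/2)²]·f′(x) − [α(b−x)(x−a−h(b−a)/2) − β(x−a)(x−b+h(b−a)/2)]·f(x) − (h(b−a)/2)·[α(b−x)f(a) + β(x−a)f(b)] + (h²(b−a)²/8)·[β(x−a)f′(b) − α(b−x)f′(a)] + [α(b−x) − β(x−a)]·F(x) + β(x−a) | ≤ (‖f″‖_∞/6)·[ α(b−x)·{(x−a−h(b−a)/2)³ + (h(b−a)/2)³} + β(x−a)·{(b−h(b−a)/2−x)³ + (h(b−a)/2)³} ], where ‖f″‖_∞ denotes the essential supremum of |f″| on [a,b]. -/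
open MeasureTheory intervalIntegral

/-!
Put `m = a + h (b - a) / 2` and `n = b - h (b - a) / 2`. Take the kernel that equals
`α (b - x) (t - m) ^ 2 / 2` on `[a, x]` and `β (x - a) (t - n) ^ 2 / 2` on `(x, b]`. Integrating it
against `f''` by parts twice on each piece produces the expression to be bounded, once `∫ f = 1` is
used to write the integral of `f` over `[x, b]` as `1 - F x`. Since the kernel is nonnegative, the
bound is `‖f''‖_∞` times its integral.
-/

section AbsolutelyContinuous

variable {a b : ℝ}

theorem absolutelyContinuousOnInterval_of_eq_add_integral {g φ : ℝ → ℝ}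
    (hφ : IntervalIntegrable φ volume a b)
    (hg : ∀ t ∈ Set.uIcc a b, g t = g a + ∫ u in a..t, φ u) :
    AbsolutelyContinuousOnInterval g a b := by
  have hΦ : AbsolutelyContinuousOnInterval (fun t ↦ ∫ u in a..t, φ u) a b :=
    hφ.absolutelyContinuousOnInterval_intervalIntegral Set.left_mem_uIcc
  refine hΦ.congr' ?_
  filter_upwards [Filter.mem_inf_of_right (Filter.mem_principal_self _)] with E hE
  refine Finset.sum_congr rfl fun i hi ↦ ?_
  rw [hg _ (hE.1 i hi).1, hg _ (hE.1 i hi).2, dist_add_left]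

theorem ae_deriv_eq_of_eq_add_integral {E : Type*} [NormedAddCommGroup E] [NormedSpace ℝ E]
    [CompleteSpace E] {g φ : ℝ → E} (hφ : IntervalIntegrable φ volume a b)
    (hg : ∀ t ∈ Set.uIcc a b, g t = g a + ∫ u in a..t, φ u) :
    deriv g =ᵐ[volume.restrict (Set.uIcc a b)] φ := by
  have h_open : IsOpen (Set.uIoo a b) := isOpen_Ioo
  have hIoo : volume.restrict (Set.uIcc a b) = volume.restrict (Set.uIoo a b) :=
    Measure.restrict_congr_set Ioo_ae_eq_Icc.symm
  rw [hIoo, Filter.EventuallyEq, ae_restrict_iff' h_open.measurableSet]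
  filter_upwards [hφ.ae_hasDerivAt_integral] with t hΦ ht
  have hg_near : g =ᶠ[nhds t] fun s ↦ g a + ∫ u in a..s, φ u :=
    Filter.eventually_of_mem (h_open.mem_nhds ht) fun s hs ↦ hg s (Set.Ioo_subset_Icc_self hs)
  have hΦ_deriv := hΦ (Set.Ioo_subset_Icc_self ht) a Set.left_mem_uIcc
  exact ((hΦ_deriv.const_add (g a)).congr_of_eventuallyEq hg_near).deriv

end AbsolutelyContinuous

theorem integral_sq_sub_div_two (c d m : ℝ) :
    ∫ t in c..d, (t - m) ^ 2 / 2 = ((d - m) ^ 3 - (c - m) ^ 3) / 6 := by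
  rw [intervalIntegral.integral_div, integral_comp_sub_right (fun t ↦ t ^ 2), integral_pow]
  ring

theorem integral_sq_sub_div_two_mul_deriv {c d : ℝ} {f f' : ℝ → ℝ}
    (hf : ∀ t ∈ Set.uIcc c d, HasDerivWithinAt f (f' t) (Set.uIcc c d) t)
    (hf' : AbsolutelyContinuousOnInterval f' c d) (m : ℝ) :
    ∫ t in c..d, (t - m) ^ 2 / 2 * deriv f' t =
      ((d - m) ^ 2 / 2 * f' d - (d - m) * f d) - ((c - m) ^ 2 / 2 * f' c - (c - m) * f c)
        + ∫ t in c..d, f t := by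
  have hw : AbsolutelyContinuousOnInterval (fun t ↦ (t - m) ^ 2 / 2) c d :=
    ContDiffOn.absolutelyContinuousOnInterval (by fun_prop)
  have hw' : deriv (fun t ↦ (t - m) ^ 2 / 2) = fun t ↦ t - m := by
    ext t
    simp
  have h_linear : ∫ t in c..d, (t - m) * f' t =
      (d - m) * f d - (c - m) * f c - ∫ t in c..d, 1 * f t :=
    integral_mul_deriv_eq_deriv_mul_of_hasDerivWithinAt
      (fun t _ ↦ (hasDerivWithinAt_id t _).sub_const m) hf intervalIntegrable_const
      hf'.continuousOn.intervalIntegrable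
  rw [hw.integral_mul_deriv_eq_deriv_mul hf', hw', h_linear]
  simp only [one_mul]
  ring

theorem norm_integral_sq_sub_div_two_smul_le {E : Type*} [NormedAddCommGroup E] [NormedSpace ℝ E]
    {c d K : ℝ} {φ : ℝ → E} (hcd : c ≤ d) (hφ : ∀ᵐ t ∂volume.restrict (Set.Icc c d), ‖φ t‖ ≤ K)
    (m : ℝ) :
    ‖∫ t in c..d, ((t - m) ^ 2 / 2) • φ t‖ ≤ K / 6 * ((d - m) ^ 3 - (c - m) ^ 3) :=
  calc ‖∫ t in c..d, ((t - m) ^ 2 / 2) • φ t‖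
      ≤ ∫ t in c..d, (t - m) ^ 2 / 2 * K := by
        have h_int : IntervalIntegrable (fun t ↦ (t - m) ^ 2 / 2 * K) volume c d :=
          Continuous.intervalIntegrable (by fun_prop) c d
        refine norm_integral_le_of_norm_le hcd ?_ h_int
        filter_upwards [(ae_restrict_iff' measurableSet_Icc).1 hφ] with t hφt ht
        rw [norm_smul, Real.norm_of_nonneg (by positivity)]
        exact mul_le_mul_of_nonneg_left (hφt (Set.Ioc_subset_Icc_self ht)) (by positivity)
    _ = K / 6 * ((d - m) ^ 3 - (c - m) ^ 3) := by
        rw [intervalIntegral.integral_mul_const, integral_sq_sub_div_two]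
        ring

section WeightedPeano

variable {a b x : ℝ} {f f' : ℝ → ℝ}

theorem weighted_integral_sq_sub_div_two_mul_deriv (hx : x ∈ Set.uIcc a b)
    (hf : ∀ t ∈ Set.uIcc a b, HasDerivWithinAt f (f' t) (Set.uIcc a b) t)
    (hf' : AbsolutelyContinuousOnInterval f' a b) (p q m n : ℝ) :
    p * (∫ t in a..x, (t - m) ^ 2 / 2 * deriv f' t)
        + q * (∫ t in x..b, (t - n) ^ 2 / 2 * deriv f' t) =
      (1 / 2) * (p * (x - m) ^ 2 - q * (x - n) ^ 2) * f' x - (p * (x - m) - q * (x - n)) * f x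
        - (p * (m - a) * f a + q * (b - n) * f b)
        + (1 / 2) * (q * (b - n) ^ 2 * f' b - p * (m - a) ^ 2 * f' a)
        + (p - q) * (∫ u in a..x, f u) + q * ∫ u in a..b, f u := by
  have hax : Set.uIcc a x ⊆ Set.uIcc a b := Set.uIcc_subset_uIcc_left hx
  have hxb : Set.uIcc x b ⊆ Set.uIcc a b := Set.uIcc_subset_uIcc_right hx
  have hfc : ContinuousOn f (Set.uIcc a b) := fun t ht ↦ (hf t ht).continuousWithinAt
  have h_split : (∫ u in a..x, f u) + ∫ u in x..b, f u = ∫ u in a..b, f u :=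
    integral_add_adjacent_intervals (hfc.mono hax).intervalIntegrable
      (hfc.mono hxb).intervalIntegrable
  rw [integral_sq_sub_div_two_mul_deriv (fun t ht ↦ (hf t (hax ht)).mono hax) (hf'.mono hax),
    integral_sq_sub_div_two_mul_deriv (fun t ht ↦ (hf t (hxb ht)).mono hxb) (hf'.mono hxb),
    ← h_split]
  ring

theorem stmt_17_general {K : ℝ} (hx : x ∈ Set.Icc a b)
    (hf : ∀ t ∈ Set.Icc a b, HasDerivWithinAt f (f' t) (Set.Icc a b) t)
    (hf' : AbsolutelyContinuousOnInterval f' a b)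
    (hK : ∀ᵐ t ∂volume.restrict (Set.Icc a b), |deriv f' t| ≤ K) (p q m n : ℝ) :
    |(1 / 2) * (p * (x - m) ^ 2 - q * (x - n) ^ 2) * f' x - (p * (x - m) - q * (x - n)) * f x
        - (p * (m - a) * f a + q * (b - n) * f b)
        + (1 / 2) * (q * (b - n) ^ 2 * f' b - p * (m - a) ^ 2 * f' a)
        + (p - q) * (∫ u in a..x, f u) + q * ∫ u in a..b, f u| ≤
      (K / 6) * (|p| * ((x - m) ^ 3 + (m - a) ^ 3) + |q| * ((n - x) ^ 3 + (b - n) ^ 3)) := by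
  have hK_left : ∀ᵐ t ∂volume.restrict (Set.Icc a x), ‖deriv f' t‖ ≤ K :=
    ae_restrict_of_ae_restrict_of_subset (Set.Icc_subset_Icc_right hx.2) hK
  have hK_right : ∀ᵐ t ∂volume.restrict (Set.Icc x b), ‖deriv f' t‖ ≤ K :=
    ae_restrict_of_ae_restrict_of_subset (Set.Icc_subset_Icc_left hx.1) hK
  have hab : Set.uIcc a b = Set.Icc a b := Set.uIcc_of_le (hx.1.trans hx.2)
  rw [← weighted_integral_sq_sub_div_two_mul_deriv (hab ▸ hx) (hab ▸ hf) hf']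
  calc |p * (∫ t in a..x, (t - m) ^ 2 / 2 * deriv f' t)
          + q * (∫ t in x..b, (t - n) ^ 2 / 2 * deriv f' t)|
      ≤ |p| * |∫ t in a..x, (t - m) ^ 2 / 2 * deriv f' t|
          + |q| * |∫ t in x..b, (t - n) ^ 2 / 2 * deriv f' t| := by
        simpa only [abs_mul] using abs_add_le (p * _) (q * _)
    _ ≤ |p| * (K / 6 * ((x - m) ^ 3 - (a - m) ^ 3))
          + |q| * (K / 6 * ((b - n) ^ 3 - (x - n) ^ 3)) := by
        gcongr
        · exact norm_integral_sq_sub_div_two_smul_le hx.1 hK_left m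
        · exact norm_integral_sq_sub_div_two_smul_le hx.2 hK_right n
    _ = (K / 6) * (|p| * ((x - m) ^ 3 + (m - a) ^ 3) + |q| * ((n - x) ^ 3 + (b - n) ^ 3)) := by
        ring

end WeightedPeano

theorem stmt_17 (a b h α β x : ℝ) (f f' f'' : ℝ → ℝ)
    (hab : a < b)
    (hh : h ∈ Set.Icc (0 : ℝ) 1)
    (hα : 0 ≤ α) (hβ : 0 ≤ β) (hαβ : 0 < α + β)
    (hax : a < x) (hxb : x < b)
    (hx1 : a + h * (b - a) / 2 ≤ x) (hx2 : x ≤ b - h * (b - a) / 2)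
    (hfpos : ∀ t ∈ Set.Icc a b, 0 ≤ f t)
    (hpdf : (∫ u in a..b, f u) = 1)
    (hfd : ∀ t ∈ Set.Icc a b, HasDerivAt f (f' t) t)
    (hf''int : IntervalIntegrable f'' MeasureTheory.volume a b)
    (hac : ∀ t ∈ Set.Icc a b, f' t = f' a + ∫ u in a..t, f'' u)
    (K : ℝ) (hK : ∀ᵐ t ∂MeasureTheory.volume.restrict (Set.Icc a b), |f'' t| ≤ K)
    :
    |(1 / 2) * (α * (b - x) * (x - a - h * (b - a) / 2) ^ 2
          - β * (x - a) * (x - b + h * (b - a) / 2) ^ 2) * f' x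
      - (α * (b - x) * (x - a - h * (b - a) / 2)
          - β * (x - a) * (x - b + h * (b - a) / 2)) * f x
      - (h * (b - a) / 2) * (α * (b - x) * f a + β * (x - a) * f b)
      + (h ^ 2 * (b - a) ^ 2 / 8) * (β * (x - a) * f' b - α * (b - x) * f' a)
      + (α * (b - x) - β * (x - a)) * (∫ u in a..x, f u) + β * (x - a)| ≤
      (K / 6) *
        (α * (b - x) * ((x - a - h * (b - a) / 2) ^ 3 + (h * (b - a) / 2) ^ 3)
          + β * (x - a) * ((b - h * (b - a) / 2 - x) ^ 3 + (h * (b - a) / 2) ^ 3)) := by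
  have hab_uIcc : Set.uIcc a b = Set.Icc a b := Set.uIcc_of_le hab.le
  rw [← hab_uIcc] at hac
  have hf'' : deriv f' =ᵐ[volume.restrict (Set.Icc a b)] f'' :=
    hab_uIcc ▸ ae_deriv_eq_of_eq_add_integral hf''int hac
  have h_bound := stmt_17_general ⟨hax.le, hxb.le⟩ (fun t ht ↦ (hfd t ht).hasDerivWithinAt)
    (absolutelyContinuousOnInterval_of_eq_add_integral hf''int hac)
    (by filter_upwards [hK, hf''] with t ht hd using hd ▸ ht)
    (α * (b - x)) (β * (x - a)) (a + h * (b - a) / 2) (b - h * (b - a) / 2)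
  rw [hpdf, abs_of_nonneg (mul_nonneg hα (sub_nonneg.2 hxb.le)),
    abs_of_nonneg (mul_nonneg hβ (sub_nonneg.2 hax.le))] at h_bound
  convert! h_bound using 2 <;> ring
end

section
/- If f″ is essentially bounded on [a,b], then for every α > 0, | α(b−x)·[ (1/2)(x−a−h(b−a)/2)²·f′(x) − (x−a−h(b−a)/2)·f(x) − (h(b−a)/2)·f(a) − (h²(b−a)²/8)·f′(a) + F(x) ] | ≤ α(b−x)·{(x−a−h(b−a)/2)³ + (h(b−a)/2)³}·‖f″‖_∞/6, where ‖f″‖_∞ denotes the essential supremum of |f″| on [a,b]. -/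
open MeasureTheory intervalIntegral

/-!
Put `p = a + h (b - a) / 2`. Two integrations by parts against the kernel `(t - p) ^ 2 / 2` on
`[a, x]` turn the bracket into the remainder `∫ t in a..x, (t - p) ^ 2 / 2 * f'' t`. The kernel is
nonnegative and has total mass `((x - p) ^ 3 - (a - p) ^ 3) / 6`, so the remainder is at most this
mass times the essential bound on `f''`. Only the first integration by parts needs absolute
continuity, because `f'` is merely the primitive of an integrable function.
-/

section IntegrationByParts

variable {a b : ℝ}

theorem absolutelyContinuousOnInterval_const_add_integral {g : ℝ → ℝ}
    (hg : IntervalIntegrable g volume a b) (c : ℝ) :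
    AbsolutelyContinuousOnInterval (fun t ↦ c + ∫ s in a..t, g s) a b :=
  contDiffOn_const.absolutelyContinuousOnInterval.add
    (hg.absolutelyContinuousOnInterval_intervalIntegral Set.left_mem_uIcc)

theorem integral_mul_eq_sub_integral_deriv_mul {u v g : ℝ → ℝ}
    (hu : AbsolutelyContinuousOnInterval u a b) (hg : IntervalIntegrable g volume a b)
    (hv : ∀ t ∈ Set.uIcc a b, v t = v a + ∫ s in a..t, g s) :
    ∫ t in a..b, u t * g t = u b * v b - u a * v a - ∫ t in a..b, deriv u t * v t := by
  let w : ℝ → ℝ := fun t ↦ v a + ∫ s in a..t, g s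
  have hvw : Set.EqOn v w (Set.uIcc a b) := hv
  have deriv_w : ∀ᵐ t, t ∈ Set.uIoc a b → deriv w t = g t := by
    filter_upwards [hg.ae_hasDerivAt_integral] with t ht htab
    exact ((ht (Set.uIoc_subset_uIcc htab) a Set.left_mem_uIcc).const_add (v a)).deriv
  calc
    ∫ t in a..b, u t * g t = ∫ t in a..b, u t * deriv w t :=
      integral_congr_ae <| deriv_w.mono fun t ht htab ↦ by rw [ht htab]
    _ = u b * w b - u a * w a - ∫ t in a..b, deriv u t * w t :=
      hu.integral_mul_deriv_eq_deriv_mul (absolutelyContinuousOnInterval_const_add_integral hg _)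
    _ = u b * v b - u a * v a - ∫ t in a..b, deriv u t * v t := by
      rw [hvw Set.left_mem_uIcc, hvw Set.right_mem_uIcc,
        integral_congr fun t ht ↦ congrArg (deriv u t * ·) (hvw ht)]

end IntegrationByParts

section QuadraticKernel

variable {a b : ℝ} {f f' f'' : ℝ → ℝ}

theorem hasDerivAt_sub_const_sq_div_two (p t : ℝ) :
    HasDerivAt (fun t ↦ (t - p) ^ 2 / 2) (t - p) t := by
  simpa using (((hasDerivAt_id t).sub_const p).pow 2).div_const 2

theorem integral_sub_const_sq_div_two (a b p : ℝ) :
    ∫ t in a..b, (t - p) ^ 2 / 2 = ((b - p) ^ 3 - (a - p) ^ 3) / 6 := by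
  rw [intervalIntegral.integral_div, integral_comp_sub_right (fun t ↦ t ^ 2), integral_pow]
  ring

theorem integral_sub_const_mul_deriv
    (hf : ∀ t ∈ Set.uIcc a b, HasDerivWithinAt f (f' t) (Set.uIcc a b) t)
    (hf' : IntervalIntegrable f' volume a b) (p : ℝ) :
    ∫ t in a..b, (t - p) * f' t = (b - p) * f b - (a - p) * f a - ∫ t in a..b, f t := by
  simpa only [id_eq, one_mul] using integral_mul_deriv_eq_deriv_mul_of_hasDerivWithinAt
    (fun t _ ↦ ((hasDerivAt_id t).sub_const p).hasDerivWithinAt) hf intervalIntegrable_const hf'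

theorem integral_sub_const_sq_div_two_mul_deriv_deriv
    (hf : ∀ t ∈ Set.uIcc a b, HasDerivWithinAt f (f' t) (Set.uIcc a b) t)
    (hf'' : IntervalIntegrable f'' volume a b)
    (hf' : ∀ t ∈ Set.uIcc a b, f' t = f' a + ∫ s in a..t, f'' s) (p : ℝ) :
    ∫ t in a..b, (t - p) ^ 2 / 2 * f'' t =
      (b - p) ^ 2 / 2 * f' b - (a - p) ^ 2 / 2 * f' a - (b - p) * f b + (a - p) * f a
        + ∫ t in a..b, f t := by
  have kernel_ac : AbsolutelyContinuousOnInterval (fun t ↦ (t - p) ^ 2 / 2) a b :=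
    ContDiffOn.absolutelyContinuousOnInterval (by fun_prop)
  have f'_int : IntervalIntegrable f' volume a b :=
    ((absolutelyContinuousOnInterval_const_add_integral hf'' _).continuousOn.congr
      hf').intervalIntegrable
  rw [integral_mul_eq_sub_integral_deriv_mul kernel_ac hf'' hf']
  simp only [(hasDerivAt_sub_const_sq_div_two p _).deriv]
  rw [integral_sub_const_mul_deriv hf f'_int]
  ring

end QuadraticKernel

theorem norm_integral_smul_le_integral_mul {E : Type*} [NormedAddCommGroup E] [NormedSpace ℝ E]
    {μ : Measure ℝ} {a b K : ℝ} {w : ℝ → ℝ} {g : ℝ → E} (hab : a ≤ b)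
    (hw : IntervalIntegrable w μ a b) (hw_nonneg : ∀ t ∈ Set.Ioc a b, 0 ≤ w t)
    (hg : ∀ᵐ t ∂μ.restrict (Set.Ioc a b), ‖g t‖ ≤ K) :
    ‖∫ t in a..b, w t • g t ∂μ‖ ≤ (∫ t in a..b, w t ∂μ) * K := by
  rw [← intervalIntegral.integral_mul_const]
  refine intervalIntegral.norm_integral_le_of_norm_le hab ?_ (hw.mul_const K)
  filter_upwards [(ae_restrict_iff' measurableSet_Ioc).mp hg] with t ht htab
  rw [norm_smul, Real.norm_of_nonneg (hw_nonneg t htab)]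
  exact mul_le_mul_of_nonneg_left (ht htab) (hw_nonneg t htab)

theorem abs_boundary_terms_add_integral_le {a b K : ℝ} {f f' f'' : ℝ → ℝ} (hab : a ≤ b)
    (hf : ∀ t ∈ Set.Icc a b, HasDerivWithinAt f (f' t) (Set.Icc a b) t)
    (hf'' : IntervalIntegrable f'' volume a b)
    (hf' : ∀ t ∈ Set.Icc a b, f' t = f' a + ∫ s in a..t, f'' s)
    (hK : ∀ᵐ t ∂volume.restrict (Set.Icc a b), |f'' t| ≤ K) (p : ℝ) :
    |(b - p) ^ 2 / 2 * f' b - (a - p) ^ 2 / 2 * f' a - (b - p) * f b + (a - p) * f a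
        + ∫ t in a..b, f t| ≤ ((b - p) ^ 3 - (a - p) ^ 3) / 6 * K := by
  rw [← Set.uIcc_of_le hab] at hf hf'
  rw [← integral_sub_const_sq_div_two_mul_deriv_deriv hf hf'' hf', ← integral_sub_const_sq_div_two]
  have kernel_int : IntervalIntegrable (fun t ↦ (t - p) ^ 2 / 2) volume a b :=
    Continuous.intervalIntegrable (by fun_prop) a b
  exact norm_integral_smul_le_integral_mul (g := f'') hab kernel_int (fun t _ ↦ by positivity)
    (ae_restrict_of_ae_restrict_of_subset Set.Ioc_subset_Icc_self hK)

theorem stmt_19_general (a b h x : ℝ) (f f' f'' : ℝ → ℝ) (hax : a ≤ x) (hxb : x ≤ b)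
    (hfd : ∀ t ∈ Set.Icc a b, HasDerivWithinAt f (f' t) (Set.Icc a b) t)
    (hf''int : IntervalIntegrable f'' volume a b)
    (hac : ∀ t ∈ Set.Icc a b, f' t = f' a + ∫ u in a..t, f'' u)
    (K : ℝ) (hK : ∀ᵐ t ∂volume.restrict (Set.Icc a b), |f'' t| ≤ K) (α : ℝ) (hα : 0 ≤ α) :
    |α * (b - x) * ((1 / 2) * (x - a - h * (b - a) / 2) ^ 2 * f' x
        - (x - a - h * (b - a) / 2) * f x
        - (h * (b - a) / 2) * f a
        - (h ^ 2 * (b - a) ^ 2 / 8) * f' a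
        + ∫ u in a..x, f u)| ≤
      α * (b - x) * ((x - a - h * (b - a) / 2) ^ 3 + (h * (b - a) / 2) ^ 3) * K / 6 := by
  have hsub : Set.Icc a x ⊆ Set.Icc a b := Set.Icc_subset_Icc_right hxb
  have weight_nonneg : 0 ≤ α * (b - x) := mul_nonneg hα (sub_nonneg.mpr hxb)
  have bracket_le := abs_boundary_terms_add_integral_le hax
    (fun t ht ↦ (hfd t (hsub ht)).mono hsub)
    (hf''int.mono_set (Set.uIcc_subset_uIcc_left (Set.mem_uIcc_of_le hax hxb)))
    (fun t ht ↦ hac t (hsub ht)) (ae_restrict_of_ae_restrict_of_subset hsub hK)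
    (a + h * (b - a) / 2)
  simp only [sub_add_eq_sub_sub, sub_self, zero_sub] at bracket_le
  rw [abs_mul, abs_of_nonneg weight_nonneg]
  calc
    _ ≤ α * (b - x) *
        (((x - a - h * (b - a) / 2) ^ 3 - (-(h * (b - a) / 2)) ^ 3) / 6 * K) := by
      refine mul_le_mul_of_nonneg_left (le_of_eq_of_le (congrArg abs ?_) bracket_le) weight_nonneg
      ring
    _ = _ := by ring

theorem stmt_19 (a b h x : ℝ) (f f' f'' : ℝ → ℝ)
    (hab : a < b)
    (hh : h ∈ Set.Icc (0 : ℝ) 1)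
    (hax : a < x) (hxb : x < b)
    (hx1 : a + h * (b - a) / 2 ≤ x) (hx2 : x ≤ b - h * (b - a) / 2)
    (hfpos : ∀ t ∈ Set.Icc a b, 0 ≤ f t)
    (hpdf : (∫ u in a..b, f u) = 1)
    (hfd : ∀ t ∈ Set.Icc a b, HasDerivAt f (f' t) t)
    (hf''int : IntervalIntegrable f'' MeasureTheory.volume a b)
    (hac : ∀ t ∈ Set.Icc a b, f' t = f' a + ∫ u in a..t, f'' u)
    (K : ℝ) (hK : ∀ᵐ t ∂MeasureTheory.volume.restrict (Set.Icc a b), |f'' t| ≤ K)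
    :
    ∀ α : ℝ, 0 < α →
      |α * (b - x) * ((1 / 2) * (x - a - h * (b - a) / 2) ^ 2 * f' x
          - (x - a - h * (b - a) / 2) * f x
          - (h * (b - a) / 2) * f a
          - (h ^ 2 * (b - a) ^ 2 / 8) * f' a
          + ∫ u in a..x, f u)| ≤
        α * (b - x) * ((x - a - h * (b - a) / 2) ^ 3 + (h * (b - a) / 2) ^ 3) * K / 6 :=
  fun α hα ↦ stmt_19_general a b h x f f' f'' hax.le hxb.le
    (fun t ht ↦ (hfd t ht).hasDerivWithinAt) hf''int hac K hK α hα.le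
end
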